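/- arXiv:1902.10232 — 2 statements merged into one kernel-verified Lean document; each statement's English description precedes it below -/
import Mathlib

section
/- For every nonnegative integer m, the family of Dubiner functions {φ_{(i,j)} : i ≥ 0, j ≥ 0, i+j ≤ m} is linearly independent and spans the space of restrictions to the reference triangle T² of all real polynomials in two variables of total degree at most m; in particular this space has dimension (m+1)(m+2)/2 and the Dubiner functions form an L²(T²)-orthogonal basis of it. -/
/-- The Jacobi polynomial `P_n^{a,b}` (nonnegative integer parameters `a`, `b`), defined
through the Rodrigues formula. -/
noncomputable def jacobiP (n a b : ℕ) (x : ℝ) : ℝ :=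
  ((-1 : ℝ) ^ n / (2 ^ n * n.factorial)) * (1 - x) ^ (-(a : ℤ)) * (1 + x) ^ (-(b : ℤ)) *
    iteratedDeriv n (fun y : ℝ => (1 - y) ^ (n + a) * (1 + y) ^ (n + b)) x

/-- The two-dimensional Dubiner basis function with indices `(i, j)`. -/
noncomputable def dubiner2 (i j : ℕ) (ξ : ℝ × ℝ) : ℝ :=
  jacobiP i 0 0 ((1 + 2 * ξ.1 + ξ.2) / (1 - ξ.2)) * ((1 - ξ.2) / 2) ^ i *
    jacobiP j (2 * i + 1) 0 ξ.2

/-- The reference triangle `T² = {(ξ₁,ξ₂) : ξ₁ ≥ -1, ξ₂ ≥ -1, ξ₁+ξ₂ ≤ 0}`. -/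
def refTriangle : Set (ℝ × ℝ) := {ξ | -1 ≤ ξ.1 ∧ -1 ≤ ξ.2 ∧ ξ.1 + ξ.2 ≤ 0}

/-- The interior of the reference triangle. -/
def refTriangleInt : Set (ℝ × ℝ) := {ξ | -1 < ξ.1 ∧ -1 < ξ.2 ∧ ξ.1 + ξ.2 < 0}

/-- The Dubiner functions with total index at most `m`, restricted to the triangle
(viewed as functions on the triangle). -/
noncomputable def dubinerFamily (m : ℕ) :
    {p : ℕ × ℕ // p.1 + p.2 ≤ m} → (↥refTriangleInt → ℝ) :=
  fun p ξ => dubiner2 p.1.1 p.1.2 ξ.1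

/-- The space of restrictions to the reference triangle of bivariate real polynomials of
total degree at most `m`. -/
def polyRestrictions (m : ℕ) : Submodule ℝ (↥refTriangleInt → ℝ) :=
  Submodule.span ℝ {f | ∃ q : MvPolynomial (Fin 2) ℝ, q.totalDegree ≤ m ∧
    ∀ ξ : ↥refTriangleInt, f ξ = MvPolynomial.eval ![ξ.1.1, ξ.1.2] q}

open Polynomial MeasureTheory

/-- The polynomial `(1 - X)^(n+a) (1 + X)^n` occurring in the Rodrigues formula for `P_n^{a,0}`. -/
noncomputable def rodriguesPoly (n a : ℕ) : ℝ[X] := (1 - X) ^ (n + a) * (1 + X) ^ n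

/-- The Jacobi polynomial `P_n^{a,0}` as an element of `ℝ[X]`. -/
noncomputable def jacobiPoly (n a : ℕ) : ℝ[X] :=
  C ((-1 : ℝ) ^ n / (2 ^ n * n.factorial)) * (derivative^[n] (rodriguesPoly n a) / (1 - X) ^ a)

lemma iteratedDeriv_polynomial_eval (p : ℝ[X]) (n : ℕ) :
    iteratedDeriv n (fun x => p.eval x) = fun x => (derivative^[n] p).eval x := by
  induction n with
  | zero => simp
  | succ n ih =>
    rw [iteratedDeriv_succ, ih]
    ext x
    rw [Polynomial.deriv, Function.iterate_succ_apply']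

lemma one_sub_X_eq : (1 - X : ℝ[X]) = -(X - C 1) := by simp

lemma one_sub_X_pow_ne_zero (a : ℕ) : (1 - X : ℝ[X]) ^ a ≠ 0 :=
  pow_ne_zero _ (by rw [one_sub_X_eq]; exact neg_ne_zero.mpr (X_sub_C_ne_zero 1))

lemma natDegree_one_sub_X_pow (a : ℕ) : ((1 - X : ℝ[X]) ^ a).natDegree = a := by
  rw [natDegree_pow, one_sub_X_eq, natDegree_neg, natDegree_X_sub_C, mul_one]

lemma natDegree_rodriguesPoly (n a : ℕ) : (rodriguesPoly n a).natDegree = n + a + n := by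
  have h : (1 + X : ℝ[X]) = X + C 1 := by simp [add_comm]
  rw [rodriguesPoly, natDegree_mul (one_sub_X_pow_ne_zero _)
    (pow_ne_zero _ (by rw [h]; exact X_add_C_ne_zero 1)), natDegree_one_sub_X_pow, natDegree_pow,
    h, natDegree_X_add_C, mul_one]

lemma natDegree_iterate_derivative_eq (p : ℝ[X]) {k n : ℕ} (h : p.natDegree = n + k)
    (hp : p ≠ 0) : (derivative^[k] p).natDegree = n := by
  refine natDegree_eq_of_le_of_coeff_ne_zero ?_ ?_
  · exact (natDegree_iterate_derivative p k).trans (by omega)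
  · rw [coeff_iterate_derivative, ← h]
    refine smul_ne_zero ?_ (leadingCoeff_ne_zero.mpr hp)
    exact (Nat.descFactorial_pos.mpr (by omega)).ne'

lemma rodriguesPoly_ne_zero (n a : ℕ) : rodriguesPoly n a ≠ 0 := by
  refine mul_ne_zero (one_sub_X_pow_ne_zero _) (pow_ne_zero _ ?_)
  rw [add_comm]
  exact X_add_C_ne_zero 1

lemma one_sub_X_pow_mul_jacobiPoly (n a : ℕ) :
    (1 - X) ^ a * jacobiPoly n a =
      C ((-1 : ℝ) ^ n / (2 ^ n * n.factorial)) * derivative^[n] (rodriguesPoly n a) := by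
  have h : (1 - X : ℝ[X]) ^ a ∣ derivative^[n] (rodriguesPoly n a) := by
    have := pow_sub_dvd_iterate_derivative_of_pow_dvd n
      (show (1 - X : ℝ[X]) ^ (n + a) ∣ rodriguesPoly n a from dvd_mul_right _ _)
    rwa [Nat.add_sub_cancel_left] at this
  rw [jacobiPoly, mul_left_comm, EuclideanDomain.mul_div_cancel' (one_sub_X_pow_ne_zero a) h]

lemma jacobiP_eq_eval (n a : ℕ) {x : ℝ} (hx : a = 0 ∨ x ≠ 1) :
    jacobiP n a 0 x = (jacobiPoly n a).eval x := by
  have h := congrArg (eval x) (one_sub_X_pow_mul_jacobiPoly n a)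
  have hne : (1 - x) ^ a ≠ 0 := by
    rcases hx with rfl | hx
    · simp
    · exact pow_ne_zero _ (sub_ne_zero.mpr hx.symm)
  have hf : (fun y : ℝ => (1 - y) ^ (n + a) * (1 + y) ^ (n + 0)) =
      fun y => (rodriguesPoly n a).eval y := by
    ext y; simp [rodriguesPoly]
  rw [jacobiP, hf, iteratedDeriv_polynomial_eval]
  simp only [eval_mul, eval_pow, eval_sub, eval_one, eval_X, eval_C] at h
  rw [zpow_neg, zpow_natCast, ← mul_right_inj' hne, h]
  simp only [Nat.cast_zero, neg_zero, zpow_zero]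
  field_simp

lemma natDegree_jacobiPoly (n a : ℕ) : (jacobiPoly n a).natDegree = n ∧ jacobiPoly n a ≠ 0 := by
  have h := one_sub_X_pow_mul_jacobiPoly n a
  have hc : (-1 : ℝ) ^ n / (2 ^ n * n.factorial) ≠ 0 := by positivity
  have hd : (derivative^[n] (rodriguesPoly n a)).natDegree = n + a :=
    natDegree_iterate_derivative_eq _ (natDegree_rodriguesPoly n a) (rodriguesPoly_ne_zero n a)
  have h0 : jacobiPoly n a ≠ 0 := by
    intro h0
    rw [h0, mul_zero] at h
    have hz := (mul_eq_zero.mp h.symm).resolve_left (C_ne_zero.mpr hc)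
    have hco := coeff_iterate_derivative (k := n) (p := rodriguesPoly n a) (m := n + a)
    rw [hz, coeff_zero, ← natDegree_rodriguesPoly] at hco
    refine smul_ne_zero ?_ (leadingCoeff_ne_zero.mpr (rodriguesPoly_ne_zero n a)) hco.symm
    exact (Nat.descFactorial_pos.mpr (by rw [natDegree_rodriguesPoly]; omega)).ne'
  refine ⟨?_, h0⟩
  have h2 := congrArg natDegree h
  rw [natDegree_mul (one_sub_X_pow_ne_zero a) h0, natDegree_one_sub_X_pow,
    natDegree_C_mul hc, hd] at h2
  omega

/-- The Jacobi polynomials `P_n^{a,0}`, `n = 0, 1, …`, as a sequence of polynomials of degree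
`n`. -/
noncomputable def jacobiSeq (a : ℕ) : Polynomial.Sequence ℝ where
  elems' n := jacobiPoly n a
  degree_eq' n := by
    rw [degree_eq_natDegree (natDegree_jacobiPoly n a).2, (natDegree_jacobiPoly n a).1]

/-- Iterated integration by parts with vanishing boundary terms. -/
lemma integral_iterate_derivative_mul_eq_zero (k : ℕ) (w q : ℝ[X])
    (hr : ∀ i < k, (derivative^[i] w).eval 1 = 0) (hl : ∀ i < k, (derivative^[i] w).eval (-1) = 0)
    (hq : derivative^[k] q = 0) :
    ∫ x in (-1 : ℝ)..1, (derivative^[k] w).eval x * q.eval x = 0 := by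
  induction k generalizing q with
  | zero =>
    have : q = 0 := hq
    simp [this]
  | succ k ih =>
    have hparts := intervalIntegral.integral_mul_deriv_eq_deriv_mul (a := (-1 : ℝ)) (b := 1)
      (fun x _ => q.hasDerivAt x) (fun x _ => (derivative^[k] w).hasDerivAt x)
      ((Polynomial.continuous _).intervalIntegrable _ _)
      ((Polynomial.continuous _).intervalIntegrable _ _)
    rw [hr k k.lt_succ_self, hl k k.lt_succ_self] at hparts
    have hrec := ih (derivative q) (fun i hi => hr i (by omega)) (fun i hi => hl i (by omega)) hq
    simp_rw [mul_comm (eval _ (derivative q))] at hparts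
    rw [hrec] at hparts
    simp_rw [Function.iterate_succ_apply', mul_comm _ (eval _ q)]
    simpa using hparts

lemma integral_one_sub_pow_mul_jacobiPoly_mul_eq_zero (n a : ℕ) (q : ℝ[X])
    (hq : q.natDegree < n) :
    ∫ x in (-1 : ℝ)..1, (1 - x) ^ a * (jacobiPoly n a).eval x * q.eval x = 0 := by
  have hr : ∀ i < n, (derivative^[i] (rodriguesPoly n a)).eval 1 = 0 := fun i hi => by
    have h := (pow_sub_dvd_iterate_derivative_of_pow_dvd i
      (show (1 - X : ℝ[X]) ^ (n + a) ∣ rodriguesPoly n a from dvd_mul_right _ _))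
    have h' := eval_dvd (x := (1 : ℝ)) ((dvd_pow_self _ (by omega)).trans h)
    simpa using h'
  have hl : ∀ i < n, (derivative^[i] (rodriguesPoly n a)).eval (-1) = 0 := fun i hi => by
    have h := (pow_sub_dvd_iterate_derivative_of_pow_dvd i
      (show (1 + X : ℝ[X]) ^ n ∣ rodriguesPoly n a from dvd_mul_left _ _))
    have h' := eval_dvd (x := (-1 : ℝ)) ((dvd_pow_self _ (by omega)).trans h)
    simpa using h'
  have h := integral_iterate_derivative_mul_eq_zero n (rodriguesPoly n a) q hr hl
    (iterate_derivative_eq_zero hq)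
  have hfun : ∀ x : ℝ, (1 - x) ^ a * (jacobiPoly n a).eval x * q.eval x =
      (-1 : ℝ) ^ n / (2 ^ n * n.factorial) *
        ((derivative^[n] (rodriguesPoly n a)).eval x * q.eval x) := fun x => by
    have h := congrArg (eval x) (one_sub_X_pow_mul_jacobiPoly n a)
    simp only [eval_mul, eval_pow, eval_sub, eval_one, eval_X, eval_C] at h
    rw [h, mul_assoc]
  simp_rw [hfun]
  rw [intervalIntegral.integral_const_mul, h, mul_zero]

lemma integral_jacobiPoly_mul_jacobiPoly (a : ℕ) {j l : ℕ} (h : j ≠ l) :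
    ∫ x in (-1 : ℝ)..1, (1 - x) ^ a * (jacobiPoly j a).eval x * (jacobiPoly l a).eval x = 0 := by
  rcases lt_or_gt_of_ne h with h | h
  · simp_rw [mul_right_comm _ (eval _ (jacobiPoly j a))]
    exact integral_one_sub_pow_mul_jacobiPoly_mul_eq_zero l a _
      (by rwa [(natDegree_jacobiPoly j a).1])
  · exact integral_one_sub_pow_mul_jacobiPoly_mul_eq_zero j a _
      (by rwa [(natDegree_jacobiPoly l a).1])

lemma Polynomial.Sequence.coeff_eq_zero_of_sum_eval_eq_zero (S : Polynomial.Sequence ℝ) (N : ℕ)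
    (c : ℕ → ℝ) (h : ∀ x ∈ Set.Ioo (-1 : ℝ) 1, ∑ i ∈ Finset.range N, c i * (S i).eval x = 0) :
    ∀ i < N, c i = 0 := by
  have hz : ∑ i ∈ Finset.range N, c i • S i = 0 := by
    refine eq_zero_of_infinite_isRoot _ ((Set.Ioo_infinite (show (-1 : ℝ) < 1 by norm_num)).mono ?_)
    intro x hx
    simpa [IsRoot, eval_finsetSum] using h x hx
  intro i hi
  exact linearIndependent_iff'.mp S.linearIndependent _ c hz i (Finset.mem_range.mpr hi)

lemma dubiner2_eq_eval (i j : ℕ) (x : ℝ) {y : ℝ} (hy : y ≠ 1) :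
    dubiner2 i j (x, y) = (jacobiPoly i 0).eval ((1 + 2 * x + y) / (1 - y)) * ((1 - y) / 2) ^ i *
      (jacobiPoly j (2 * i + 1)).eval y := by
  rw [dubiner2, jacobiP_eq_eval i 0 (Or.inl rfl), jacobiP_eq_eval j _ (Or.inr hy)]

/-- The Dubiner function with indices `(i, j)` as a bivariate polynomial. -/
noncomputable def dubinerPoly (i j : ℕ) : MvPolynomial (Fin 2) ℝ :=
  (∑ k ∈ Finset.range (i + 1), MvPolynomial.C ((jacobiPoly i 0).coeff k) *
      (MvPolynomial.C (1 / 2) + MvPolynomial.X 0 + MvPolynomial.C (1 / 2) * MvPolynomial.X 1) ^ k *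
      (MvPolynomial.C (1 / 2) + MvPolynomial.C (-1 / 2) * MvPolynomial.X 1) ^ (i - k)) *
    ∑ l ∈ Finset.range (j + 1), MvPolynomial.C ((jacobiPoly j (2 * i + 1)).coeff l) *
      MvPolynomial.X 1 ^ l

lemma eval_dubinerPoly (i j : ℕ) (x : ℝ) {y : ℝ} (hy : y ≠ 1) :
    MvPolynomial.eval ![x, y] (dubinerPoly i j) = dubiner2 i j (x, y) := by
  have hy' : 1 - y ≠ 0 := sub_ne_zero.mpr hy.symm
  rw [dubiner2_eq_eval i j x hy, dubinerPoly, map_mul, map_sum, map_sum,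
    eval_eq_sum_range' (n := i + 1) (by rw [(natDegree_jacobiPoly i 0).1]; omega),
    eval_eq_sum_range' (n := j + 1) (by rw [(natDegree_jacobiPoly j _).1]; omega)]
  congr 1
  · rw [Finset.sum_mul]
    refine Finset.sum_congr rfl fun k hk => ?_
    have hk' : i = k + (i - k) := by have := Finset.mem_range.mp hk; omega
    have hA : 1 / 2 + x + 1 / 2 * y = (1 + 2 * x + y) / (1 - y) * ((1 - y) / 2) := by
      field_simp
    have hB : 1 / 2 + -1 / 2 * y = (1 - y) / 2 := by ring
    simp only [map_mul, map_pow, map_add, MvPolynomial.eval_C, MvPolynomial.eval_X,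
      Matrix.cons_val_zero, Matrix.cons_val_one]
    rw [hA, hB]
    conv_rhs => rw [hk', pow_add]
    rw [← hk', mul_pow]
    ring
  · simp

lemma totalDegree_dubinerPoly_le (i j : ℕ) : (dubinerPoly i j).totalDegree ≤ i + j := by
  have hA : (MvPolynomial.C (1 / 2) + MvPolynomial.X 0 + MvPolynomial.C (1 / 2) *
      MvPolynomial.X 1 : MvPolynomial (Fin 2) ℝ).totalDegree ≤ 1 := by
    refine (MvPolynomial.totalDegree_add _ _).trans (max_le ?_ ?_)
    · refine (MvPolynomial.totalDegree_add _ _).trans (max_le ?_ ?_) <;> simp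
    · refine (MvPolynomial.totalDegree_mul _ _).trans ?_
      simp
  have hB : (MvPolynomial.C (1 / 2) + MvPolynomial.C (-1 / 2) *
      MvPolynomial.X 1 : MvPolynomial (Fin 2) ℝ).totalDegree ≤ 1 := by
    refine (MvPolynomial.totalDegree_add _ _).trans (max_le ?_ ?_)
    · simp
    · refine (MvPolynomial.totalDegree_mul _ _).trans ?_
      simp
  refine (MvPolynomial.totalDegree_mul _ _).trans (add_le_add ?_ ?_)
  · refine MvPolynomial.totalDegree_finsetSum_le fun k hk => ?_
    refine (MvPolynomial.totalDegree_mul _ _).trans ?_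
    have h1 := MvPolynomial.totalDegree_mul (MvPolynomial.C ((jacobiPoly i 0).coeff k))
      ((MvPolynomial.C (1 / 2) + MvPolynomial.X 0 + MvPolynomial.C (1 / 2) *
        MvPolynomial.X 1 : MvPolynomial (Fin 2) ℝ) ^ k)
    rw [MvPolynomial.totalDegree_C, zero_add] at h1
    have h2 := h1.trans ((MvPolynomial.totalDegree_pow _ k).trans (Nat.mul_le_mul_left k hA))
    have h3 := (MvPolynomial.totalDegree_pow _ (i - k)).trans (Nat.mul_le_mul_left (i - k) hB)
    have := Finset.mem_range.mp hk
    omega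
  · refine MvPolynomial.totalDegree_finsetSum_le fun l hl => ?_
    refine (MvPolynomial.totalDegree_mul _ _).trans ?_
    rw [MvPolynomial.totalDegree_C, MvPolynomial.totalDegree_X_pow, zero_add]
    exact Finset.mem_range_succ_iff.mp hl

/-- The Duffy map sends the open square to the interior of the reference triangle. -/
lemma duffy_mem_refTriangleInt {η y : ℝ} (hη : η ∈ Set.Ioo (-1 : ℝ) 1)
    (hy : y ∈ Set.Ioo (-1 : ℝ) 1) : ((1 - y) / 2 * η + ((1 - y) / 2 - 1), y) ∈ refTriangleInt := by
  obtain ⟨h1, h2⟩ := hη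
  obtain ⟨h3, h4⟩ := hy
  refine ⟨?_, h3, ?_⟩
  · show -1 < (1 - y) / 2 * η + ((1 - y) / 2 - 1)
    nlinarith
  · show (1 - y) / 2 * η + ((1 - y) / 2 - 1) + y < 0
    nlinarith

lemma dubiner2_duffy (i j : ℕ) (η : ℝ) {y : ℝ} (hy : y ≠ 1) :
    dubiner2 i j ((1 - y) / 2 * η + ((1 - y) / 2 - 1), y) =
      (jacobiPoly i 0).eval η * ((1 - y) / 2) ^ i * (jacobiPoly j (2 * i + 1)).eval y := by
  have hy' : 1 - y ≠ 0 := sub_ne_zero.mpr hy.symm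
  rw [dubiner2_eq_eval i j _ hy]
  congr 3
  field_simp
  ring

lemma linearIndependent_dubiner2 :
    LinearIndependent ℝ (fun (p : ℕ × ℕ) (ξ : refTriangleInt) => dubiner2 p.1 p.2 ξ.1) := by
  classical
  rw [linearIndependent_iff']
  intro s g hg
  obtain ⟨N, hN⟩ : ∃ N, s ⊆ Finset.range N ×ˢ Finset.range N := by
    refine ⟨s.sup (fun p => p.1 + p.2) + 1, fun p hp => ?_⟩
    have := Finset.le_sup (f := fun p : ℕ × ℕ => p.1 + p.2) hp
    simp only [Finset.mem_product, Finset.mem_range]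
    omega
  set c : ℕ × ℕ → ℝ := fun p => if p ∈ s then g p else 0 with hc
  have hsum : ∀ ξ ∈ refTriangleInt, ∑ i ∈ Finset.range N, ∑ j ∈ Finset.range N,
      c (i, j) * dubiner2 i j ξ = 0 := fun ξ hξ => by
    rw [← Finset.sum_product' (f := fun i j => c (i, j) * dubiner2 i j ξ),
      ← Finset.sum_subset hN (fun p _ hp => by simp [hc, hp])]
    have h := congrFun hg ⟨ξ, hξ⟩
    simp only [Finset.sum_apply, Pi.smul_apply, smul_eq_mul, Pi.zero_apply] at h
    rw [← h]
    exact Finset.sum_congr rfl fun p hp => by simp [hc, hp]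
  have hcol : ∀ y ∈ Set.Ioo (-1 : ℝ) 1, ∀ i < N, ∑ j ∈ Finset.range N,
      c (i, j) * (jacobiPoly j (2 * i + 1)).eval y = 0 := fun y hy i hi => by
    have h := (jacobiSeq 0).coeff_eq_zero_of_sum_eval_eq_zero N
      (fun i => ((1 - y) / 2) ^ i * ∑ j ∈ Finset.range N,
        c (i, j) * (jacobiPoly j (2 * i + 1)).eval y) (fun η hη => by
          rw [← hsum _ (duffy_mem_refTriangleInt hη hy)]
          refine Finset.sum_congr rfl fun i _ => ?_
          rw [Finset.mul_sum, Finset.sum_mul]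
          refine Finset.sum_congr rfl fun j _ => ?_
          rw [dubiner2_duffy i j η hy.2.ne]
          simp only [jacobiSeq]
          ring) i hi
    exact (mul_eq_zero.mp h).resolve_left (pow_ne_zero _ (by linarith [hy.2]))
  intro p hp
  obtain ⟨hp1, hp2⟩ := Finset.mem_product.mp (hN hp)
  have h := (jacobiSeq (2 * p.1 + 1)).coeff_eq_zero_of_sum_eval_eq_zero N (fun j => c (p.1, j))
    (fun y hy => hcol y hy p.1 (Finset.mem_range.mp hp1)) p.2 (Finset.mem_range.mp hp2)
  simpa [hc, hp] using h

lemma isCompact_refTriangle : IsCompact refTriangle := by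
  refine (isCompact_Icc (a := ((-1, -1) : ℝ × ℝ)) (b := (1, 1))).of_isClosed_subset ?_ ?_
  · exact (isClosed_le continuous_const continuous_fst).inter
      ((isClosed_le continuous_const continuous_snd).inter
        (isClosed_le (continuous_fst.add continuous_snd) continuous_const))
  · rintro ⟨x, y⟩ ⟨h1, h2, h3⟩
    simp only at h1 h2 h3
    exact ⟨⟨h1, h2⟩, ⟨by simp only; linarith, by simp only; linarith⟩⟩

lemma setIntegral_refTriangle {F : ℝ × ℝ → ℝ} (hF : Continuous F) :
    ∫ ξ in refTriangle, F ξ = ∫ y in (-1 : ℝ)..1, ∫ x in (-1 : ℝ)..(-y), F (x, y) := by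
  have hm := isCompact_refTriangle.measurableSet
  have hint : Integrable (refTriangle.indicator F) (volume.prod volume) := by
    rw [← Measure.volume_eq_prod, integrable_indicator_iff hm]
    exact hF.continuousOn.integrableOn_compact isCompact_refTriangle
  rw [← integral_indicator hm, Measure.volume_eq_prod, integral_prod_symm _ hint,
    intervalIntegral.integral_of_le (by norm_num), ← integral_Icc_eq_integral_Ioc,
    ← integral_indicator measurableSet_Icc]
  congr 1
  ext y
  by_cases hy : y ∈ Set.Icc (-1 : ℝ) 1
  · rw [Set.indicator_of_mem hy, intervalIntegral.integral_of_le (by linarith [hy.2]),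
      ← integral_Icc_eq_integral_Ioc, ← integral_indicator measurableSet_Icc]
    congr 1
    ext x
    have hiff : (x, y) ∈ refTriangle ↔ x ∈ Set.Icc (-1) (-y) :=
      ⟨fun h => ⟨h.1, by have := h.2.2; simp only at this; linarith⟩,
        fun h => ⟨h.1, hy.1, by have := h.2; simp only; linarith⟩⟩
    simp only [Set.indicator, hiff]
  · rw [Set.indicator_of_notMem hy]
    have hz : ∀ x, refTriangle.indicator F (x, y) = 0 := fun x => by
      refine Set.indicator_of_notMem (fun h => hy ⟨h.2.1, ?_⟩) _
      have h1 := h.1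
      have h2 := h.2.2
      simp only at h1 h2
      linarith
    simp [hz]

lemma setIntegral_dubiner2_mul_dubiner2 (i j k l : ℕ) :
    ∫ ξ in refTriangle, dubiner2 i j ξ * dubiner2 k l ξ =
      ∫ y in (-1 : ℝ)..1, ((1 - y) / 2) ^ (i + k + 1) * (jacobiPoly j (2 * i + 1)).eval y *
        (jacobiPoly l (2 * k + 1)).eval y *
        ∫ η in (-1 : ℝ)..1, (jacobiPoly i 0).eval η * (jacobiPoly k 0).eval η := by
  set F : ℝ × ℝ → ℝ := fun ξ => MvPolynomial.eval ![ξ.1, ξ.2] (dubinerPoly i j) *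
    MvPolynomial.eval ![ξ.1, ξ.2] (dubinerPoly k l) with hFdef
  have hv : Continuous fun ξ : ℝ × ℝ => (![ξ.1, ξ.2] : Fin 2 → ℝ) := by
    refine continuous_pi fun n => ?_
    fin_cases n
    · exact continuous_fst
    · exact continuous_snd
  have hF : Continuous F := ((MvPolynomial.continuous_eval _).comp hv).mul
    ((MvPolynomial.continuous_eval _).comp hv)
  have hcongr : ∫ ξ in refTriangle, dubiner2 i j ξ * dubiner2 k l ξ =
      ∫ ξ in refTriangle, F ξ := by
    refine setIntegral_congr_ae isCompact_refTriangle.measurableSet ?_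
    have hne : ∀ᵐ ξ : ℝ × ℝ, ξ ≠ (-1, 1) := by
      rw [ae_iff]
      simp
    filter_upwards [hne] with ξ hξ hT
    have hy : ξ.2 ≠ 1 := fun h => hξ (Prod.ext
      (le_antisymm (by have := hT.2.2; linarith) hT.1) h)
    simp only [hFdef, eval_dubinerPoly _ _ _ hy]
  rw [hcongr, setIntegral_refTriangle hF]
  refine intervalIntegral.integral_congr fun y _ => ?_
  have hsub := intervalIntegral.mul_integral_comp_mul_add (a := -1) (b := 1)
    (f := fun x => F (x, y)) (c := (1 - y) / 2) (d := (1 - y) / 2 - 1)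
  rw [show (1 - y) / 2 * -1 + ((1 - y) / 2 - 1) = -1 by ring,
    show (1 - y) / 2 * 1 + ((1 - y) / 2 - 1) = -y by ring] at hsub
  rw [← hsub]
  by_cases hy : y = 1
  · simp [hy]
  · simp only [hFdef, eval_dubinerPoly _ _ _ hy, dubiner2_duffy _ _ _ hy]
    rw [← intervalIntegral.integral_const_mul, ← intervalIntegral.integral_const_mul]
    refine intervalIntegral.integral_congr fun η _ => ?_
    ring

lemma setIntegral_dubiner2_mul_dubiner2_eq_zero {p q : ℕ × ℕ} (h : p ≠ q) :
    ∫ ξ in refTriangle, dubiner2 p.1 p.2 ξ * dubiner2 q.1 q.2 ξ = 0 := by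
  obtain ⟨i, j⟩ := p
  obtain ⟨k, l⟩ := q
  rw [setIntegral_dubiner2_mul_dubiner2, intervalIntegral.integral_mul_const, mul_eq_zero]
  by_cases hik : i = k
  · subst hik
    left
    have hjl : j ≠ l := fun hjl => h (by rw [hjl])
    have h0 := integral_jacobiPoly_mul_jacobiPoly (2 * i + 1) hjl
    have hfun : ∀ y : ℝ, ((1 - y) / 2) ^ (i + i + 1) * (jacobiPoly j (2 * i + 1)).eval y *
        (jacobiPoly l (2 * i + 1)).eval y = (1 / 2) ^ (2 * i + 1) *
          ((1 - y) ^ (2 * i + 1) * (jacobiPoly j (2 * i + 1)).eval y *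
            (jacobiPoly l (2 * i + 1)).eval y) := fun y => by
      rw [← two_mul, div_eq_mul_one_div, mul_pow]
      ring
    simp only [hfun]
    rw [intervalIntegral.integral_const_mul, h0, mul_zero]
  · right
    simpa using integral_jacobiPoly_mul_jacobiPoly 0 hik

instance fintypeTotalIndexLE (m : ℕ) : Fintype {p : ℕ × ℕ // p.1 + p.2 ≤ m} :=
  Fintype.subtype ((Finset.range (m + 1)).biUnion Finset.HasAntidiagonal.antidiagonal) fun p => by
    simp

lemma card_totalIndexLE (m : ℕ) :
    Fintype.card {p : ℕ × ℕ // p.1 + p.2 ≤ m} = (m + 1) * (m + 2) / 2 := by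
  rw [fintypeTotalIndexLE, Fintype.subtype_card, Finset.card_biUnion]
  · have h := Finset.sum_range_succ' (fun k => k) (m + 1)
    simp only [Finset.Nat.card_antidiagonal]
    rw [add_zero] at h
    rw [← h, Finset.sum_range_id]
    congr 1
    rw [mul_comm]
    rfl
  · intro a _ b _ hab
    refine Finset.disjoint_left.mpr fun p hp hq => hab ?_
    rw [Finset.HasAntidiagonal.mem_antidiagonal] at hp hq
    omega

lemma polyRestrictions_le_span_monomials (m : ℕ) :
    polyRestrictions m ≤ Submodule.span ℝ (Set.range
      fun (p : {p : ℕ × ℕ // p.1 + p.2 ≤ m}) (ξ : refTriangleInt) =>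
        ξ.1.1 ^ p.1.1 * ξ.1.2 ^ p.1.2) := by
  refine Submodule.span_le.mpr ?_
  rintro f ⟨q, hq, hf⟩
  have hf' : f = ∑ d ∈ q.support, q.coeff d • fun ξ : refTriangleInt =>
      ξ.1.1 ^ d 0 * ξ.1.2 ^ d 1 := by
    ext ξ
    rw [hf, MvPolynomial.eval_eq', Finset.sum_apply]
    simp [Fin.prod_univ_two]
  rw [hf']
  refine Submodule.sum_mem _ fun d hd => Submodule.smul_mem _ _ (Submodule.subset_span ?_)
  refine ⟨⟨(d 0, d 1), ?_⟩, rfl⟩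
  have h := (MvPolynomial.le_totalDegree hd).trans hq
  rwa [Finsupp.sum_fintype _ _ (fun _ => rfl), Fin.sum_univ_two] at h

lemma span_dubinerFamily_le (m : ℕ) :
    Submodule.span ℝ (Set.range (dubinerFamily m)) ≤ polyRestrictions m := by
  refine Submodule.span_le.mpr ?_
  rintro _ ⟨p, rfl⟩
  refine Submodule.subset_span ⟨dubinerPoly p.1.1 p.1.2,
    (totalDegree_dubinerPoly_le _ _).trans p.2, fun ξ => ?_⟩
  have hy : ξ.1.2 ≠ 1 := by
    obtain ⟨h1, -, h2⟩ := ξ.2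
    intro h
    linarith
  rw [eval_dubinerPoly _ _ _ hy]
  rfl

/-- For every `m`, the Dubiner functions `{φ_{(i,j)} : i + j ≤ m}` are linearly
independent, span the space of restrictions to the reference triangle of polynomials of
total degree at most `m` (a space of dimension `(m+1)(m+2)/2`), and form an L²-orthogonal
family on the triangle. -/
theorem dubiner2_orthogonal_basis (m : ℕ) :
    LinearIndependent ℝ (dubinerFamily m) ∧
    Submodule.span ℝ (Set.range (dubinerFamily m)) = polyRestrictions m ∧
    Module.finrank ℝ (polyRestrictions m) = (m + 1) * (m + 2) / 2 ∧
    (∀ p q : {p : ℕ × ℕ // p.1 + p.2 ≤ m}, p ≠ q →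
      ∫ ξ in refTriangle, dubiner2 p.1.1 p.1.2 ξ * dubiner2 q.1.1 q.1.2 ξ = 0) := by
  have hli : LinearIndependent ℝ (dubinerFamily m) :=
    linearIndependent_dubiner2.comp Subtype.val Subtype.val_injective
  have hcard := finrank_span_eq_card hli
  have hle := polyRestrictions_le_span_monomials m
  have := FiniteDimensional.span_of_finite ℝ (Set.finite_range
    fun (p : {p : ℕ × ℕ // p.1 + p.2 ≤ m}) (ξ : refTriangleInt) =>
      ξ.1.1 ^ p.1.1 * ξ.1.2 ^ p.1.2)
  have hfin : FiniteDimensional ℝ (polyRestrictions m) := Submodule.finiteDimensional_of_le hle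
  have hspan : Submodule.span ℝ (Set.range (dubinerFamily m)) = polyRestrictions m := by
    refine Submodule.eq_of_le_of_finrank_le (span_dubinerFamily_le m) ?_
    rw [hcard]
    exact (Submodule.finrank_mono hle).trans (finrank_range_le_card _)
  refine ⟨hli, hspan, ?_, fun p q hpq =>
    setIntegral_dubiner2_mul_dubiner2_eq_zero (Subtype.coe_injective.ne hpq)⟩
  rw [← hspan, hcard, card_totalIndexLE]
end

section
/- For all nonnegative integers i, j, k, the three-dimensional Dubiner function φ_{(i,j,k)}(ξ₁,ξ₂,ξ₃) = P_i^{0,0}(η₁) · ((1−η₂)/2)^i P_j^{2i+1,0}(η₂) · ((1−η₃)/2)^{i+j} P_k^{2i+2j+1,0}(η₃), defined on the interior of the reference tetrahedron T³ via the collapsed coordinates η₁ = (−1+2ξ₁+ξ₂+ξ₃)/(1−ξ₂−ξ₃), η₂ = (−1+2ξ₂+ξ₃)/(1−ξ₃), η₃ = −1+2ξ₃, agrees there with a polynomial in the three variables (ξ₁,ξ₂,ξ₃) of total degree at most i+j+k. -/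
/-- The three-dimensional Dubiner basis function with indices `(i, j, k)`, given in the
collapsed coordinates `η₁ = (-1+2ξ₁+ξ₂+ξ₃)/(1-ξ₂-ξ₃)`, `η₂ = (-1+2ξ₂+ξ₃)/(1-ξ₃)`,
`η₃ = -1+2ξ₃`. -/
noncomputable def dubiner3 (i j k : ℕ) (ξ : ℝ × ℝ × ℝ) : ℝ :=
  let η1 : ℝ := (-1 + 2 * ξ.1 + ξ.2.1 + ξ.2.2) / (1 - ξ.2.1 - ξ.2.2)
  let η2 : ℝ := (-1 + 2 * ξ.2.1 + ξ.2.2) / (1 - ξ.2.2)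
  let η3 : ℝ := -1 + 2 * ξ.2.2
  jacobiP i 0 0 η1 * (((1 - η2) / 2) ^ i * jacobiP j (2 * i + 1) 0 η2) *
    (((1 - η3) / 2) ^ (i + j) * jacobiP k (2 * i + 2 * j + 1) 0 η3)

theorem Polynomial.iteratedDeriv_eval {𝕜 : Type*} [NontriviallyNormedField 𝕜] (p : Polynomial 𝕜)
    (n : ℕ) :
    iteratedDeriv n (fun x => p.eval x) = fun x => (Polynomial.derivative^[n] p).eval x := by
  induction n generalizing p with
  | zero => simp
  | succ n ih =>
    have h : deriv (fun x => p.eval x) = fun x => p.derivative.eval x := by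
      ext x
      exact p.deriv
    rw [iteratedDeriv_succ', h, ih, Function.iterate_succ_apply]

/-- Away from `x = 1`, the Jacobi function `P_n^{a,0}` is a polynomial of degree at most `n`. -/
theorem jacobiP_zero_right_eq_eval (n a : ℕ) :
    ∃ p : Polynomial ℝ, p.natDegree ≤ n ∧ ∀ x : ℝ, x ≠ 1 → jacobiP n a 0 x = p.eval x := by
  let l : Polynomial ℝ := 1 - Polynomial.X
  let w : Polynomial ℝ := l ^ (n + a) * (1 + Polynomial.X) ^ n
  have hl : l.natDegree = 1 := by simp only [l]; compute_degree!
  have hl0 : l ≠ 0 := fun h => by simp [h] at hl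
  have hw : w.natDegree ≤ n + a + n := by
    simp only [w, l]
    refine Polynomial.natDegree_mul_le_of_le ?_ ?_
    · exact (Polynomial.natDegree_pow_le_of_le _ hl.le).trans (by simp)
    · have h : (1 + Polynomial.X : Polynomial ℝ).natDegree ≤ 1 := by compute_degree
      exact (Polynomial.natDegree_pow_le_of_le _ h).trans (by simp)
  obtain ⟨q, hq⟩ : l ^ a ∣ Polynomial.derivative^[n] w := by
    have h := Polynomial.pow_sub_dvd_iterate_derivative_of_pow_dvd n
      (Dvd.intro _ rfl : l ^ (n + a) ∣ w)
    rwa [Nat.add_sub_cancel_left] at h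
  have hqdeg : q.natDegree ≤ n := by
    rcases eq_or_ne q 0 with rfl | hq0
    · simp
    have h1 := congrArg Polynomial.natDegree hq
    rw [Polynomial.natDegree_mul (pow_ne_zero _ hl0) hq0, Polynomial.natDegree_pow, hl] at h1
    have h2 := Polynomial.natDegree_iterate_derivative w n
    omega
  refine ⟨Polynomial.C ((-1 : ℝ) ^ n / (2 ^ n * n.factorial)) * q,
    (Polynomial.natDegree_C_mul_le _ _).trans hqdeg, fun x hx => ?_⟩
  have hfun : (fun y : ℝ => (1 - y) ^ (n + a) * (1 + y) ^ (n + 0)) = fun y => w.eval y := by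
    ext y
    simp [w, l]
  have hx' : (1 - x) ^ a ≠ 0 := pow_ne_zero _ (sub_ne_zero.2 hx.symm)
  have hder : iteratedDeriv n (fun y : ℝ => w.eval y) x = (1 - x) ^ a * q.eval x := by
    rw [Polynomial.iteratedDeriv_eval, hq]
    simp [l]
  rw [jacobiP, hfun, hder]
  simp only [Nat.cast_zero, neg_zero, zpow_zero, mul_one, zpow_neg, zpow_natCast,
    Polynomial.eval_mul, Polynomial.eval_C]
  field_simp

/-- Homogenizing a univariate polynomial of degree at most `n` at two multivariate polynomials
`u`, `v` of degree at most one gives a polynomial of total degree at most `n`. -/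
theorem Polynomial.exists_totalDegree_le_eval_eq_pow_mul_eval_div {σ K : Type*} [Field K]
    {p : Polynomial K} {n : ℕ} (hp : p.natDegree ≤ n) {u v : MvPolynomial σ K}
    (hu : u.totalDegree ≤ 1) (hv : v.totalDegree ≤ 1) :
    ∃ q : MvPolynomial σ K, q.totalDegree ≤ n ∧ ∀ s : σ → K, MvPolynomial.eval s v ≠ 0 →
      MvPolynomial.eval s q =
        MvPolynomial.eval s v ^ n * p.eval (MvPolynomial.eval s u / MvPolynomial.eval s v) := by
  refine ⟨∑ m ∈ Finset.range (n + 1), MvPolynomial.C (p.coeff m) * (u ^ m * v ^ (n - m)),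
    MvPolynomial.totalDegree_finsetSum_le fun m hm => ?_, fun s hs => ?_⟩
  · have hmn : m ≤ n := Nat.lt_succ_iff.1 (Finset.mem_range.1 hm)
    have h1 := MvPolynomial.totalDegree_mul (MvPolynomial.C (p.coeff m)) (u ^ m * v ^ (n - m))
    have h2 := MvPolynomial.totalDegree_mul (u ^ m) (v ^ (n - m))
    have h3 := (MvPolynomial.totalDegree_pow u m).trans (Nat.mul_le_mul_left m hu)
    have h4 := (MvPolynomial.totalDegree_pow v (n - m)).trans (Nat.mul_le_mul_left (n - m) hv)
    rw [MvPolynomial.totalDegree_C] at h1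
    omega
  · rw [Polynomial.eval_eq_sum_range' (Nat.lt_succ_of_le hp), Finset.mul_sum, map_sum]
    refine Finset.sum_congr rfl fun m hm => ?_
    have hmn : m ≤ n := Nat.lt_succ_iff.1 (Finset.mem_range.1 hm)
    rw [← Nat.sub_add_cancel hmn, pow_add, Nat.add_sub_cancel]
    simp only [map_mul, map_pow, MvPolynomial.eval_C, div_pow]
    field_simp

/-- An affine form in three variables has total degree at most one. -/
theorem MvPolynomial.totalDegree_affine_le_one {R : Type*} [CommRing R] (a b c d : R) :
    (C a + C b * X 0 + C c * X 1 + C d * X 2 : MvPolynomial (Fin 3) R).totalDegree ≤ 1 := by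
  have hX (e : R) (m : Fin 3) : (C e * X m : MvPolynomial (Fin 3) R).totalDegree ≤ 1 := by
    rw [C_mul_X_eq_monomial]
    exact (totalDegree_monomial_le _ _).trans (by simp)
  have hC : (C a : MvPolynomial (Fin 3) R).totalDegree ≤ 1 := by simp
  have hadd {p q : MvPolynomial (Fin 3) R} (hp : p.totalDegree ≤ 1) (hq : q.totalDegree ≤ 1) :
      (p + q).totalDegree ≤ 1 :=
    (totalDegree_add p q).trans (max_le hp hq)
  exact hadd (hadd (hadd hC (hX b 0)) (hX c 1)) (hX d 2)

/-- On the interior of the reference tetrahedron `T³` the Dubiner function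
`φ_{(i,j,k)}` agrees with a trivariate polynomial of total degree at most `i + j + k`. -/
theorem dubiner3_is_polynomial (i j k : ℕ) :
    ∃ q : MvPolynomial (Fin 3) ℝ, q.totalDegree ≤ i + j + k ∧
      ∀ ξ : ℝ × ℝ × ℝ, 0 < ξ.1 → 0 < ξ.2.1 → 0 < ξ.2.2 → ξ.1 + ξ.2.1 + ξ.2.2 < 1 →
        MvPolynomial.eval ![ξ.1, ξ.2.1, ξ.2.2] q = dubiner3 i j k ξ := by
  obtain ⟨p₁, hp₁, hP₁⟩ := jacobiP_zero_right_eq_eval i 0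
  obtain ⟨p₂, hp₂, hP₂⟩ := jacobiP_zero_right_eq_eval j (2 * i + 1)
  obtain ⟨p₃, hp₃, hP₃⟩ := jacobiP_zero_right_eq_eval k (2 * i + 2 * j + 1)
  have hdeg := MvPolynomial.totalDegree_affine_le_one (R := ℝ)
  obtain ⟨q₁, hq₁, hQ₁⟩ := Polynomial.exists_totalDegree_le_eval_eq_pow_mul_eval_div hp₁
    (hdeg (-1) 2 1 1) (hdeg 1 0 (-1) (-1))
  obtain ⟨q₂, hq₂, hQ₂⟩ := Polynomial.exists_totalDegree_le_eval_eq_pow_mul_eval_div hp₂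
    (hdeg (-1) 0 2 1) (hdeg 1 0 0 (-1))
  obtain ⟨q₃, hq₃, hQ₃⟩ := Polynomial.exists_totalDegree_le_eval_eq_pow_mul_eval_div hp₃
    (hdeg (-1) 0 0 2) (hdeg 1 0 0 0)
  refine ⟨q₁ * q₂ * q₃, ?_, ?_⟩
  · have h₁ := MvPolynomial.totalDegree_mul (q₁ * q₂) q₃
    have h₂ := MvPolynomial.totalDegree_mul q₁ q₂
    omega
  rintro ⟨x, y, z⟩ hx hy hz hxyz
  dsimp only at hx hy hz hxyz ⊢
  have hv₁ : 0 < 1 - y - z := by linarith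
  have hv₂ : 0 < 1 - z := by linarith
  have hη₁ : (-1 + 2 * x + y + z) / (1 - y - z) ≠ 1 := by
    rw [Ne, div_eq_one_iff_eq hv₁.ne']
    intro h
    linarith
  have hη₂ : (-1 + 2 * y + z) / (1 - z) ≠ 1 := by
    rw [Ne, div_eq_one_iff_eq hv₂.ne']
    intro h
    linarith
  have hη₃ : -1 + 2 * z ≠ 1 := by
    intro h
    linarith
  have e₁ : MvPolynomial.eval ![x, y, z] q₁ =
      (1 - y - z) ^ i * p₁.eval ((-1 + 2 * x + y + z) / (1 - y - z)) := by
    have hv : 1 + -y + -z = 1 - y - z := by ring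
    simpa [hv, hv₁.ne'] using hQ₁ ![x, y, z]
  have e₂ : MvPolynomial.eval ![x, y, z] q₂ =
      (1 - z) ^ j * p₂.eval ((-1 + 2 * y + z) / (1 - z)) := by
    simpa [← sub_eq_add_neg, hv₂.ne'] using hQ₂ ![x, y, z]
  have e₃ : MvPolynomial.eval ![x, y, z] q₃ = p₃.eval (-1 + 2 * z) := by
    simpa using hQ₃ ![x, y, z]
  have hc₂ : (1 - (-1 + 2 * y + z) / (1 - z)) / 2 = (1 - y - z) / (1 - z) := by
    field_simp
    ring
  have hc₃ : (1 - (-1 + 2 * z)) / 2 = 1 - z := by ring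
  simp only [dubiner3]
  rw [map_mul, map_mul, e₁, e₂, e₃, hP₁ _ hη₁, hP₂ _ hη₂, hP₃ _ hη₃, hc₂, hc₃, div_pow, pow_add]
  field_simp
end
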